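/- arXiv:1707.02797 — 5 statements merged into one kernel-verified Lean document; each statement's English description precedes it below -/
import Mathlib

section
/- Let A be a commutative ring and let v : A → Γ_v and w : A → Γ_w be valuations of A with values in linearly ordered commutative groups with zero (multiplicative notation). Let G_v denote the subgroup of Γ_vˣ generated by the nonzero values v(f) (f ∈ A), and G_w the subgroup of Γ_wˣ generated by the nonzero values w(f). Then the following are equivalent: (a) for all f, g ∈ A, if v(f) ≤ v(g) and v(g) ≠ 0, then w(f) ≤ w(g) and w(g) ≠ 0; (b) there exists a monotone (order-preserving) group homomorphism φ : G_v → G_w such that for every f ∈ A with v(f) ≠ 0 one has w(f) ≠ 0 and φ(v(f)) = w(f), and moreover for all f, g ∈ A with v(f) = 0 and v(g) ≠ 0 one has w(f) ≤ w(g). -/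
/-- The value group of a valuation `v` on a ring `A`: the subgroup of `Γˣ` generated by the
nonzero values `v f`, `f ∈ A`. -/
def valueSubgroup {A Γ : Type*} [CommRing A] [LinearOrderedCommGroupWithZero Γ]
    (v : Valuation A Γ) : Subgroup Γˣ :=
  Subgroup.closure {γ : Γˣ | ∃ f : A, v f = (γ : Γ)}

/-!
If (a) holds, comparing values of products shows that `v f / v g ≤ v f' / v g'` implies
`w f / w g ≤ w f' / w g'`. Every element of `G_v` is a fraction `v f / v g`, so the assignment
`v f / v g ↦ w f / w g` is well defined by antisymmetry, and it is monotone. The formal fractions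
`f / g` form the Grothendieck group of the monoid `{f | v f ≠ 0}`. It maps onto `G_v`, and the map
to `G_w` factors through this surjection.
-/

open Algebra (GrothendieckGroup)
open MonoidWithZeroHom (valueGroup valueMonoid mem_valueGroup)

section GrothendieckGroup

variable {M G H : Type*} [CommMonoid M] [CommGroup G] [CommGroup H]

theorem grothendieckGroup_lift_of (f : M →* G) (x : M) :
    GrothendieckGroup.lift f (.of x) = f x :=
  DFunLike.congr_fun (GrothendieckGroup.lift.symm_apply_apply f) x

theorem grothendieckGroup_lift_surjective {f : M →* G}
    (hf : Subgroup.closure (Set.range f) = ⊤) :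
    Function.Surjective (GrothendieckGroup.lift f) := by
  rw [← MonoidHom.range_eq_top, eq_top_iff, ← hf, Subgroup.closure_le]
  rintro _ ⟨x, rfl⟩
  exact ⟨.of x, grothendieckGroup_lift_of f x⟩

variable [Preorder G] [IsOrderedMonoid G]

theorem grothendieckGroup_lift_le_lift [Preorder H] [IsOrderedMonoid H] {f : M →* G} {h : M →* H}
    (hfh : ∀ x y, f x ≤ f y → h x ≤ h y) {s t : GrothendieckGroup M}
    (hst : GrothendieckGroup.lift f s ≤ GrothendieckGroup.lift f t) :
    GrothendieckGroup.lift h s ≤ GrothendieckGroup.lift h t := by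
  simp only [GrothendieckGroup.lift_apply, div_le_div_iff', ← map_mul] at hst ⊢
  exact hfh _ _ hst

theorem exists_monotone_monoidHom_of_le_imp_le [PartialOrder H] [IsOrderedMonoid H]
    {f : M →* G} {h : M →* H} (hf : Subgroup.closure (Set.range f) = ⊤)
    (hfh : ∀ x y, f x ≤ f y → h x ≤ h y) :
    ∃ φ : G →* H, Monotone φ ∧ ∀ x, φ (f x) = h x := by
  let F := GrothendieckGroup.lift f
  let K := GrothendieckGroup.lift h
  have hF : Function.Surjective F := grothendieckGroup_lift_surjective hf
  have le_of_le {s t} (hst : F s ≤ F t) : K s ≤ K t := grothendieckGroup_lift_le_lift hfh hst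
  have ker_le : F.ker ≤ K.ker := fun t ht => by
    have hFt : F t = F 1 := by rw [F.mem_ker.1 ht, map_one]
    rw [K.mem_ker, ← map_one K]
    exact le_antisymm (le_of_le hFt.le) (le_of_le hFt.ge)
  let φ : G →* H := F.liftOfSurjective hF ⟨K, ker_le⟩
  have φ_apply (t) : φ (F t) = K t := F.liftOfRightInverse_comp_apply _ _ ⟨K, ker_le⟩ t
  refine ⟨φ, hF.forall₂.2 fun s t hst => ?_, fun x => ?_⟩
  · simpa only [φ_apply] using le_of_le hst
  · simpa only [F, K, grothendieckGroup_lift_of] using φ_apply (.of x)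

end GrothendieckGroup

section ValueGroup

variable {A Γ : Type*} [MonoidWithZero A] [GroupWithZero Γ]

/-- The multiplicative monoid of elements at which `v` does not vanish; for a valuation on a ring,
this is the complement of the support. -/
def nonvanishing (v : A →*₀ Γ) : Submonoid A where
  carrier := {f | v f ≠ 0}
  one_mem' := by simp
  mul_mem' hf hg := by simpa using ⟨hf, hg⟩

/-- The map `f ↦ v f` into the value group of `v`, on a monoid `S` where `v` does not vanish. We do
not fix `S = nonvanishing v` because two maps `v` and `w` are compared on a common domain. -/
def toValueGroup (v : A →*₀ Γ) (S : Submonoid A) (hS : S ≤ nonvanishing v) :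
    S →* valueGroup v where
  toFun f := ⟨Units.mk0 (v f) (hS f.2), mem_valueGroup v ⟨f, rfl⟩⟩
  map_one' := Subtype.ext (Units.ext (map_one v))
  map_mul' f g := Subtype.ext (Units.ext (map_mul v (f : A) g))

theorem closure_range_toValueGroup (v : A →*₀ Γ) :
    Subgroup.closure (Set.range (toValueGroup v (nonvanishing v) le_rfl)) = ⊤ := by
  have hgen : ⊤ ≤ Subgroup.closure ((↑) ⁻¹' (valueMonoid v : Set Γˣ) : Set (valueGroup v)) :=
    Subgroup.closure_closure_coe_preimage.ge
  refine eq_top_iff.2 (hgen.trans (Subgroup.closure_mono ?_))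
  rintro γ ⟨f, hf⟩
  exact ⟨⟨f, hf.trans_ne γ.1.ne_zero⟩, Subtype.ext (Units.ext hf)⟩

end ValueGroup

theorem specializes_iff_monotone_hom_general {A Γv Γw : Type*} [CommMonoidWithZero A]
    [CommGroupWithZero Γv] [Preorder Γv] [IsOrderedMonoid Γv] [IsBotZeroClass Γv]
    [CommGroupWithZero Γw] [PartialOrder Γw] [IsOrderedMonoid Γw]
    (v : A →*₀ Γv) (w : A →*₀ Γw) :
    (∀ f g : A, v f ≤ v g → v g ≠ 0 → w f ≤ w g ∧ w g ≠ 0) ↔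
      ∃ φ : valueGroup v →* valueGroup w, Monotone φ ∧
        (∀ f : A, v f ≠ 0 → w f ≠ 0) ∧
        (∀ (f : A) (hf : v f ≠ 0),
          ((φ ⟨Units.mk0 (v f) hf, mem_valueGroup v ⟨f, rfl⟩⟩ : Γwˣ) : Γw) = w f) ∧
        (∀ f g : A, v f = 0 → v g ≠ 0 → w f ≤ w g) := by
  constructor
  · intro hvw
    have hne : nonvanishing v ≤ nonvanishing w := fun f hf => (hvw f f le_rfl hf).2
    obtain ⟨φ, hφ, hφvw⟩ := exists_monotone_monoidHom_of_le_imp_le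
      (h := toValueGroup w (nonvanishing v) hne) (closure_range_toValueGroup v)
      fun f g hfg => (hvw f g hfg g.2).1
    refine ⟨φ, hφ, hne, fun f hf => ?_, fun f g hf hg => (hvw f g (hf.trans_le zero_le) hg).1⟩
    exact congrArg (fun γ : valueGroup w => ((γ : Γwˣ) : Γw)) (hφvw ⟨f, hf⟩)
  · rintro ⟨φ, hφ, hne, hφvw, hzero⟩ f g hfg hg
    refine ⟨?_, hne g hg⟩
    by_cases hf : v f = 0
    · exact hzero f g hf hg
    · rw [← hφvw f hf, ← hφvw g hg]
      exact hφ (Subtype.mk_le_mk.2 (Units.val_le_val.1 hfg))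

/-- Characterization of specialization in the adic spectrum: `w ⤳ v` (i.e. every
rational-type subset containing `v` contains `w`) if and only if the valuations induce a
monotone group homomorphism `G_v → G_w` sending `v f` to `w f` such that moreover
`v g ≤ v f = +∞` implies `w g ≤ w f` (additive notation). -/
theorem specializes_iff_monotone_hom {A : Type*} [CommRing A]
    {Γv Γw : Type*} [LinearOrderedCommGroupWithZero Γv] [LinearOrderedCommGroupWithZero Γw]
    (v : Valuation A Γv) (w : Valuation A Γw) :
    (∀ f g : A, v f ≤ v g → v g ≠ 0 → w f ≤ w g ∧ w g ≠ 0) ↔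
      ∃ φ : valueSubgroup v →* valueSubgroup w, Monotone ⇑φ ∧
        (∀ f : A, v f ≠ 0 → w f ≠ 0) ∧
        (∀ (f : A) (hf : v f ≠ 0),
          ((φ ⟨Units.mk0 (v f) hf, Subgroup.subset_closure ⟨f, rfl⟩⟩ : Γwˣ) : Γw) = w f) ∧
        (∀ f g : A, v f = 0 → v g ≠ 0 → w f ≤ w g) := by
  -- `valueSubgroup v` and `valueGroup v.toMonoidWithZeroHom` are definitionally equal.
  exact specializes_iff_monotone_hom_general v.toMonoidWithZeroHom w.toMonoidWithZeroHom
end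

section
/- Let A be a commutative ring and let v : A → Γ_v and w : A → Γ_w be valuations of A with values in linearly ordered commutative groups with zero (multiplicative notation). Assume that w specializes to v, i.e. for all f, g ∈ A: v(f) ≤ v(g) and v(g) ≠ 0 imply w(f) ≤ w(g) and w(g) ≠ 0. Then for every f ∈ A, if f is w-topologically nilpotent then f is v-topologically nilpotent; here an element f is called u-topologically nilpotent (for a valuation u on A) if for every g ∈ A with u(g) ≠ 0 there exists n ∈ ℕ with u(fⁿ) < u(g). -/
/-- An element `f` of a ring `A` is topologically nilpotent with respect to a valuation `v`
(additively: `v (f ^ n) → +∞`) if the values `v (f ^ n)` eventually drop below every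
nonzero value of `v`. -/
def IsTopNilpotent {A Γ : Type*} [CommRing A] [LinearOrderedCommGroupWithZero Γ]
    (v : Valuation A Γ) (f : A) : Prop :=
  ∀ g : A, v g ≠ 0 → ∃ n : ℕ, v (f ^ n) < v g

/-- The valuation `w` specializes to `v`, written `w ⤳ v` in the adic spectrum: every basic open
set `{u | u f ≤ u g ≠ 0}` containing `v` also contains `w`. -/
def SpecializesTo {R Γw Γv : Type*} [Ring R] [LinearOrderedCommMonoidWithZero Γw]
    [LinearOrderedCommMonoidWithZero Γv] (w : Valuation R Γw) (v : Valuation R Γv) : Prop :=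
  ∀ f g : R, v f ≤ v g → v g ≠ 0 → w f ≤ w g ∧ w g ≠ 0

namespace SpecializesTo

variable {R Γw Γv : Type*} [Ring R] [LinearOrderedCommMonoidWithZero Γw]
  [LinearOrderedCommMonoidWithZero Γv] {w : Valuation R Γw} {v : Valuation R Γv} {f g : R}

theorem ne_zero (h : SpecializesTo w v) (hg : v g ≠ 0) : w g ≠ 0 :=
  (h g g le_rfl hg).2

theorem lt_of_lt (h : SpecializesTo w v) (hg : v g ≠ 0) (hfg : w f < w g) : v f < v g := by
  by_contra! hgf
  have hf : v f ≠ 0 := ((zero_lt_iff.mpr hg).trans_le hgf).ne'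
  exact hfg.not_ge (h g f hgf hf).1

end SpecializesTo

/-- If `w` specializes to `v` in the adic spectrum, then every `w`-topologically nilpotent
element is `v`-topologically nilpotent. -/
theorem isTopNilpotent_of_specializes {A : Type*} [CommRing A]
    {Γv Γw : Type*} [LinearOrderedCommGroupWithZero Γv] [LinearOrderedCommGroupWithZero Γw]
    (v : Valuation A Γv) (w : Valuation A Γw)
    (hspec : ∀ f g : A, v f ≤ v g → v g ≠ 0 → w f ≤ w g ∧ w g ≠ 0) :
    ∀ f : A, IsTopNilpotent w f → IsTopNilpotent v f := by
  intro f hf g hg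
  have hwv : SpecializesTo w v := hspec
  obtain ⟨n, hn⟩ := hf g (hwv.ne_zero hg)
  exact ⟨n, hwv.lt_of_lt hg hn⟩
end

section
/- Let A be a commutative ring and let v : A → Γ_v and w : A → Γ_w be valuations of A with values in linearly ordered commutative groups with zero (multiplicative notation). (i) If w specializes to v, i.e. for all f, g ∈ A: v(f) ≤ v(g) and v(g) ≠ 0 imply w(f) ≤ w(g) and w(g) ≠ 0, then for every f ∈ A, w(f) < 1 implies v(f) < 1 (additively: w(f) > 0 implies v(f) > 0). (ii) Conversely, if the specialization is horizontal, i.e. there exists an injective monotone group homomorphism φ : G_v → G_w with φ(v(f)) = w(f) whenever v(f) ≠ 0, and such that for all f, g ∈ A with v(f) = 0 and v(g) ≠ 0 one has w(f) < w(g), then for every f ∈ A, v(f) < 1 implies w(f) < 1. -/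
/-!
A specialization preserves the relation `v f ≤ v g ≠ 0`, so by contraposition it carries strict
inequalities back from `w` to `v`. Horizontality makes it carry them forward as well: an injective
monotone map of value groups is strictly monotone, and the elements of the support of `v` are
controlled separately. Comparing `f` with `1` gives both implications.
-/

theorem lt_of_lt_of_forall_le_imp_le {α Γ Γ' : Type*} [LinearOrder Γ] [Zero Γ]
    [IsBotZeroClass Γ] [Preorder Γ'] {v : α → Γ} {w : α → Γ'}
    (h : ∀ f g : α, v f ≤ v g → v g ≠ 0 → w f ≤ w g) {f g : α} (hg : v g ≠ 0)
    (hlt : w f < w g) : v f < v g := by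
  by_contra! hle
  have hf : v f ≠ 0 := ((pos_of_ne_zero hg).trans_le hle).ne'
  exact (h g f hle hf).not_gt hlt

section HorizontalSpecialization

variable {A Γ Γ' : Type*} [CommRing A] [LinearOrderedCommGroupWithZero Γ]

/-- The nonzero value `v f` as an element of the value group of `v`. -/
def valueSubgroup.mk (v : Valuation A Γ) (f : A) (hf : v f ≠ 0) : valueSubgroup v :=
  ⟨Units.mk0 (v f) hf, Subgroup.subset_closure ⟨f, rfl⟩⟩

theorem lt_of_lt_of_strictMono_valueSubgroup [Preorder Γ'] {v : Valuation A Γ} {w : A → Γ'}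
    {φ : valueSubgroup v → Γ'} (hφ : StrictMono φ)
    (hφw : ∀ (f : A) (hf : v f ≠ 0), φ (valueSubgroup.mk v f hf) = w f)
    (hsupp : ∀ f g : A, v f = 0 → v g ≠ 0 → w f < w g) {f g : A} (hlt : v f < v g) :
    w f < w g := by
  have hg : v g ≠ 0 := (zero_le.trans_lt hlt).ne'
  by_cases hf : v f = 0
  · exact hsupp f g hf hg
  · have hmk : valueSubgroup.mk v f hf < valueSubgroup.mk v g hg := hlt
    simpa only [hφw] using hφ hmk

end HorizontalSpecialization

theorem lt_one_of_specializes_general {A Γv Γw : Type*} [CommRing A]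
    [LinearOrderedCommGroupWithZero Γv] [LinearOrderedCommMonoidWithZero Γw]
    (v : Valuation A Γv) (w : Valuation A Γw) :
    ((∀ f g : A, v f ≤ v g → v g ≠ 0 → w f ≤ w g) →
      ∀ f g : A, v g ≠ 0 → w f < w g → v f < v g) ∧
    ((∃ φ : valueSubgroup v → Γw, StrictMono φ ∧
        (∀ (f : A) (hf : v f ≠ 0), φ (valueSubgroup.mk v f hf) = w f) ∧
        (∀ f g : A, v f = 0 → v g ≠ 0 → w f < w g)) →
      ∀ f g : A, v f < v g → w f < w g) :=
  ⟨fun h _ _ ↦ lt_of_lt_of_forall_le_imp_le h,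
    fun ⟨_, hφ, hφw, hsupp⟩ _ _ ↦ lt_of_lt_of_strictMono_valueSubgroup hφ hφw hsupp⟩

/-- (i) If `w` specializes to `v` in the adic spectrum then `w f < 1` implies `v f < 1`
(additively: `w f > 0 ⟹ v f > 0`); (ii) conversely, if the specialization is horizontal
(the valuations induce an injective monotone homomorphism `G_v ↪ G_w` sending `v f` to
`w f`, with `v g < v f = +∞ ⟹ w g < w f` additively), then `v f < 1` implies `w f < 1`. -/
theorem lt_one_of_specializes {A : Type*} [CommRing A]
    {Γv Γw : Type*} [LinearOrderedCommGroupWithZero Γv] [LinearOrderedCommGroupWithZero Γw]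
    (v : Valuation A Γv) (w : Valuation A Γw) :
    ((∀ f g : A, v f ≤ v g → v g ≠ 0 → w f ≤ w g ∧ w g ≠ 0) →
      ∀ f : A, w f < 1 → v f < 1) ∧
    ((∃ φ : valueSubgroup v →* valueSubgroup w, Function.Injective ⇑φ ∧ Monotone ⇑φ ∧
        (∀ (f : A) (hf : v f ≠ 0),
          ((φ ⟨Units.mk0 (v f) hf, Subgroup.subset_closure ⟨f, rfl⟩⟩ : Γwˣ) : Γw) = w f) ∧
        (∀ f g : A, v f = 0 → v g ≠ 0 → w f < w g)) →
      ∀ f : A, v f < 1 → w f < 1) := by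
  obtain ⟨hback, hforward⟩ := lt_one_of_specializes_general v w
  refine ⟨fun h f ↦ ?_, fun ⟨φ, hinj, hmono, hφw, hsupp⟩ f ↦ ?_⟩
  · simpa using hback (fun f g hle hg ↦ (h f g hle hg).1) f 1
  · simpa using hforward ⟨fun x ↦ (φ x : Γwˣ), hmono.strictMono_of_injective hinj, hφw, hsupp⟩ f 1
end

section
/- Let A be a commutative ring and v a valuation on A with values in a linearly ordered commutative group with zero (multiplicative notation) which is nonnegative, i.e. v(f) ≤ 1 for all f ∈ A. Let I and J be ideals of A. Then every element of the product ideal I·J is v-topologically nilpotent if and only if every element of I is v-topologically nilpotent or every element of J is v-topologically nilpotent. -/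
section

variable {A Γ : Type*} [CommRing A] [LinearOrderedCommGroupWithZero Γ] {v : Valuation A Γ}

theorem not_isTopNilpotent_iff {f : A} :
    ¬ IsTopNilpotent v f ↔ ∃ g : A, v g ≠ 0 ∧ ∀ n : ℕ, v g ≤ v (f ^ n) := by
  simp only [IsTopNilpotent, not_forall, not_exists, not_lt, exists_prop]

theorem not_isTopNilpotent_mul {f h : A} (hf : ¬ IsTopNilpotent v f)
    (hh : ¬ IsTopNilpotent v h) : ¬ IsTopNilpotent v (f * h) := by
  obtain ⟨a, ha, hfa⟩ := not_isTopNilpotent_iff.mp hf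
  obtain ⟨b, hb, hhb⟩ := not_isTopNilpotent_iff.mp hh
  refine not_isTopNilpotent_iff.mpr ⟨a * b, ?_, fun n ↦ ?_⟩
  · rw [map_mul]
    exact mul_ne_zero ha hb
  · calc
      v (a * b) = v a * v b := map_mul v a b
      _ ≤ v (f ^ n) * v (h ^ n) := mul_le_mul' (hfa n) (hhb n)
      _ = v ((f * h) ^ n) := by rw [mul_pow, map_mul]

variable (v) in
theorem isTopNilpotent_mul_ideal_iff_general (I J : Ideal A) :
    (∀ f ∈ I * J, IsTopNilpotent v f) ↔
      (∀ f ∈ I, IsTopNilpotent v f) ∨ (∀ f ∈ J, IsTopNilpotent v f) := by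
  constructor
  · contrapose!
    rintro ⟨⟨f, hfI, hf⟩, ⟨h, hhJ, hh⟩⟩
    exact ⟨f * h, Ideal.mul_mem_mul hfI hhJ, not_isTopNilpotent_mul hf hh⟩
  · rintro (hI | hJ) f hf
    · exact hI f (Ideal.mul_le_left hf)
    · exact hJ f (Ideal.mul_le_right hf)

end

/-- For a nonnegative valuation `v` on `A` and ideals `I`, `J` of `A`, every element of
`I * J` is `v`-topologically nilpotent iff every element of `I` is or every element of `J`
is.  (This is the algebraic content of `]X₁ ∪ X₂[_V = ]X₁[_V ∪ ]X₂[_V`.) -/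
theorem isTopNilpotent_mul_ideal_iff {A Γ : Type*} [CommRing A]
    [LinearOrderedCommGroupWithZero Γ] (v : Valuation A Γ) (hv : ∀ f : A, v f ≤ 1)
    (I J : Ideal A) :
    (∀ f ∈ I * J, IsTopNilpotent v f) ↔
      (∀ f ∈ I, IsTopNilpotent v f) ∨ (∀ f ∈ J, IsTopNilpotent v f) :=
  isTopNilpotent_mul_ideal_iff_general v I J
end

section
/- Every valuation v on the ring of integers ℤ, with values in a linearly ordered commutative group with zero (multiplicative notation), is equivalent to exactly one of the following: (i) the trivial valuation (the valuation v₀ with v₀(n) = 1 for n ≠ 0 and v₀(0) = 0); (ii) for a unique prime p, the valuation p̄ given by p̄(n) = 0 if p ∣ n and p̄(n) = 1 otherwise; (iii) for a unique prime p, the p-adic valuation v_p (characterized up to equivalence by: v_p(0) = 0, and for nonzero integers m, n one has v_p(m) ≤ v_p(n) if and only if the exponent of p in the factorization of n is at most the exponent of p in the factorization of m). -/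
/-- The trivial valuation on `ℤ`: `v₀ n = 1` for `n ≠ 0` and `v₀ 0 = 0`. -/
noncomputable def trivialValuationInt : Valuation ℤ (WithZero (Multiplicative ℤ)) where
  toFun n := if n = 0 then 0 else 1
  map_zero' := if_pos rfl
  map_one' := by simp
  map_mul' x y := by
    rcases eq_or_ne x 0 with h | h <;> rcases eq_or_ne y 0 with h' | h' <;>
      simp [h, h', mul_eq_zero]
  map_add_le_max' x y := by
    rcases eq_or_ne x 0 with h | h <;> rcases eq_or_ne y 0 with h' | h' <;>
      rcases eq_or_ne (x + y) 0 with h'' | h'' <;>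
      simp [h, h', h'', zero_le']

/-- The valuation `p̄` on `ℤ` attached to a prime `p`: `p̄ n = 0` if `p ∣ n` and
`p̄ n = 1` otherwise (the trivial valuation with support `pℤ`). -/
noncomputable def primeBarValuation (p : Nat.Primes) :
    Valuation ℤ (WithZero (Multiplicative ℤ)) where
  toFun n := if ((p : ℕ) : ℤ) ∣ n then 0 else 1
  map_zero' := if_pos (dvd_zero _)
  map_one' := by simp [(Nat.prime_iff_prime_int.1 p.2).not_dvd_one]
  map_mul' x y := by
    have hp : Prime ((p : ℕ) : ℤ) := Nat.prime_iff_prime_int.1 p.2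
    by_cases hx : ((p : ℕ) : ℤ) ∣ x <;> by_cases hy : ((p : ℕ) : ℤ) ∣ y <;>
      simp [hp.dvd_mul, hx, hy]
  map_add_le_max' x y := by
    by_cases hx : ((p : ℕ) : ℤ) ∣ x <;> by_cases hy : ((p : ℕ) : ℤ) ∣ y <;>
      by_cases hxy : ((p : ℕ) : ℤ) ∣ (x + y) <;>
      first
        | exact absurd (dvd_add hx hy) hxy
        | simp [hx, hy, hxy, zero_le']

/-- `v` is (equivalent to) the `p`-adic valuation on `ℤ`: for nonzero `m`, `n` one has
`v m ≤ v n` iff the exponent of `p` in `n` is at most the exponent of `p` in `m`.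
(This characterizes the `p`-adic valuation up to equivalence.) -/
def IsPadicType {Γ : Type*} [LinearOrderedCommGroupWithZero Γ]
    (v : Valuation ℤ Γ) (p : Nat.Primes) : Prop :=
  ∀ m n : ℤ, m ≠ 0 → n ≠ 0 → (v m ≤ v n ↔ padicValInt p n ≤ padicValInt p m)

/-!
A valuation `v` on `ℤ` is bounded by `1`, so by Bézout `v` is `1` on everything coprime to an
`n` with `v n < 1`. Hence at most one prime `p` has `v p < 1`, and if there is one then
`v n = v p ^ k` for `n ≠ 0`, with `k` the exponent of `p` in `n`. So `v` is determined up to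
equivalence by its values at the primes: it is trivial iff all of them are `1`, it is `p̄` iff
`v p = 0`, and it is `p`-adic iff `0 < v p < 1`.
-/

section BoundedByOne

variable {R Γ : Type*} [CommRing R] [LinearOrderedCommMonoidWithZero Γ] {v : Valuation R Γ}

theorem valuation_eq_one_of_isCoprime (hv : ∀ x, v x ≤ 1) {x y : R} (hx : v x < 1)
    (hxy : IsCoprime x y) : v y = 1 := by
  obtain ⟨a, b, hab⟩ := hxy
  have hax : v (a * x) < 1 := by
    rw [map_mul]
    exact (mul_le_of_le_one_left' (hv a)).trans_lt hx
  have hby : v (b * y) ≤ v y := by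
    rw [map_mul]
    exact mul_le_of_le_one_left' (hv b)
  have hmax : 1 ≤ max (v (a * x)) (v (b * y)) := by
    rw [← v.map_one, ← hab]
    exact v.map_add _ _
  exact (hv y).antisymm (((le_max_iff.1 hmax).resolve_left hax.not_ge).trans hby)

theorem valuation_eq_one_of_isUnit (hv : ∀ x, v x ≤ 1) {x : R} (hx : IsUnit x) : v x = 1 := by
  obtain ⟨u, rfl⟩ := hx
  refine (hv u).antisymm ?_
  calc
    1 = v u * v ↑u⁻¹ := by rw [← map_mul, u.mul_inv, map_one]
    _ ≤ v u := mul_le_of_le_one_right' (hv _)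

theorem valuation_eq_one_of_forall_prime [UniqueFactorizationMonoid R] (hv : ∀ x, v x ≤ 1)
    (hprime : ∀ p, Prime p → v p = 1) {x : R} (hx : x ≠ 0) : v x = 1 := by
  induction x using UniqueFactorizationMonoid.induction_on_prime with
  | h₁ => exact absurd rfl hx
  | h₂ u hu => exact valuation_eq_one_of_isUnit hv hu
  | h₃ a p ha hp ih => rw [map_mul, hprime p hp, ih ha, one_mul]

variable [IsBezout R] {p : R}

theorem valuation_eq_one_of_not_dvd (hv : ∀ x, v x ≤ 1) (hp : Irreducible p) (hvp : v p < 1)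
    {x : R} (hpx : ¬p ∣ x) : v x = 1 :=
  valuation_eq_one_of_isCoprime hv hvp (hp.coprime_iff_not_dvd.2 hpx)

theorem associated_of_valuation_lt_one (hv : ∀ x, v x ≤ 1) {q : R} (hp : Irreducible p)
    (hq : Irreducible q) (hvp : v p < 1) (hvq : v q < 1) : Associated p q :=
  hp.associated_of_dvd hq <| by
    by_contra hpq
    exact hvq.ne (valuation_eq_one_of_not_dvd hv hp hvp hpq)

theorem valuation_eq_pow_multiplicity (hv : ∀ x, v x ≤ 1) (hp : Irreducible p) (hvp : v p < 1)
    {x : R} (hx : FiniteMultiplicity p x) : v x = v p ^ multiplicity p x := by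
  obtain ⟨c, hxc, hpc⟩ := hx.exists_eq_pow_mul_and_not_dvd
  calc
    v x = v p ^ multiplicity p x * v c := by rw [← map_pow, ← map_mul, ← hxc]
    _ = v p ^ multiplicity p x := by rw [valuation_eq_one_of_not_dvd hv hp hvp hpc, mul_one]

theorem valuation_le_iff_multiplicity_le (hv : ∀ x, v x ≤ 1) (hp : Irreducible p) (hvp₀ : v p ≠ 0)
    (hvp : v p < 1) {x y : R} (hx : FiniteMultiplicity p x) (hy : FiniteMultiplicity p y) :
    v x ≤ v y ↔ multiplicity p y ≤ multiplicity p x := by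
  rw [valuation_eq_pow_multiplicity hv hp hvp hx, valuation_eq_pow_multiplicity hv hp hvp hy]
  exact pow_le_pow_iff_right_of_lt_one₀ (zero_lt_iff.2 hvp₀) hvp

end BoundedByOne

theorem valuation_isEquiv_of_eq_ite {R Γ Γ' : Type*} [Ring R] [LinearOrderedCommMonoidWithZero Γ]
    [Nontrivial Γ] [LinearOrderedCommMonoidWithZero Γ'] [Nontrivial Γ'] {v : Valuation R Γ}
    {w : Valuation R Γ'} {P : R → Prop} [DecidablePred P]
    (hv : ∀ x, v x = if P x then 0 else 1) (hw : ∀ x, w x = if P x then 0 else 1) :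
    v.IsEquiv w := by
  intro x y
  rw [hv, hv, hw, hw]
  split_ifs <;> simp

theorem valuation_intCast_le_one {R Γ : Type*} [Ring R] [LinearOrderedCommGroupWithZero Γ]
    (v : Valuation R Γ) (n : ℤ) : v n ≤ 1 :=
  intCast_mem v.integer n

section Int

variable {Γ : Type*} [LinearOrderedCommGroupWithZero Γ] (v : Valuation ℤ Γ)

theorem primes_eq_of_valuation_lt_one {p q : Nat.Primes} (hp : v ((p : ℕ) : ℤ) < 1)
    (hq : v ((q : ℕ) : ℤ) < 1) : p = q := by
  have hassoc : Associated ((p : ℕ) : ℤ) ((q : ℕ) : ℤ) :=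
    associated_of_valuation_lt_one (valuation_intCast_le_one v)
      (Nat.prime_iff_prime_int.1 p.2).irreducible (Nat.prime_iff_prime_int.1 q.2).irreducible hp hq
  exact Subtype.ext (Int.associated_iff_natAbs.1 hassoc)

theorem isEquiv_trivialValuationInt_iff :
    v.IsEquiv trivialValuationInt ↔ ∀ p : Nat.Primes, v ((p : ℕ) : ℤ) = 1 := by
  constructor
  · intro h p
    exact h.eq_one_iff_eq_one.2 (if_neg (Nat.cast_ne_zero.2 p.2.ne_zero))
  · intro h
    have hprime (q : ℤ) (hq : Prime q) : v q = 1 := by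
      have hnatAbs : v (q.natAbs : ℤ) = 1 := h ⟨q.natAbs, Int.prime_iff_natAbs_prime.1 hq⟩
      rcases Int.natAbs_eq q with hq' | hq' <;> rw [hq']
      · exact hnatAbs
      · rwa [v.map_neg]
    refine valuation_isEquiv_of_eq_ite (P := (· = 0)) (fun n ↦ ?_) fun _ ↦ rfl
    split_ifs with hn
    · rw [hn, map_zero]
    · exact valuation_eq_one_of_forall_prime (valuation_intCast_le_one v) hprime hn

theorem isEquiv_primeBarValuation_iff (p : Nat.Primes) :
    v.IsEquiv (primeBarValuation p) ↔ v ((p : ℕ) : ℤ) = 0 := by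
  constructor
  · intro h
    exact h.eq_zero.2 (if_pos dvd_rfl)
  · intro hvp
    refine valuation_isEquiv_of_eq_ite (P := (((p : ℕ) : ℤ) ∣ ·)) (fun n ↦ ?_) fun _ ↦ rfl
    split_ifs with hpn
    · obtain ⟨m, rfl⟩ := hpn
      rw [map_mul, hvp, zero_mul]
    · exact valuation_eq_one_of_not_dvd (valuation_intCast_le_one v)
        (Nat.prime_iff_prime_int.1 p.2).irreducible (by simp [hvp]) hpn

theorem isPadicType_iff (p : Nat.Primes) :
    IsPadicType v p ↔ v ((p : ℕ) : ℤ) ≠ 0 ∧ v ((p : ℕ) : ℤ) < 1 := by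
  have : Fact (p : ℕ).Prime := ⟨p.2⟩
  have hp : Prime ((p : ℕ) : ℤ) := Nat.prime_iff_prime_int.1 p.2
  constructor
  · intro h
    refine ⟨fun hvp ↦ ?_, lt_of_not_ge fun hvp ↦ ?_⟩
    · have hle := (h p (p * p) hp.ne_zero (mul_ne_zero hp.ne_zero hp.ne_zero)).1 (by simp [hvp])
      rw [padicValInt.mul hp.ne_zero hp.ne_zero, padicValInt_self] at hle
      omega
    · have hle := (h 1 p one_ne_zero hp.ne_zero).1 (by rwa [map_one])
      rw [padicValInt_self, padicValInt.one] at hle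
      omega
  · rintro ⟨hvp₀, hvp⟩ m n hm hn
    rw [padicValInt.of_ne_one_ne_zero p.2.ne_one hm, padicValInt.of_ne_one_ne_zero p.2.ne_one hn]
    exact valuation_le_iff_multiplicity_le (valuation_intCast_le_one v) hp.irreducible hvp₀ hvp
      (.of_prime_left hp hm) (.of_prime_left hp hn)

end Int

/-- Classification of the points of `Spv(ℤ)`: every valuation on `ℤ` is equivalent to
exactly one of the trivial valuation, the valuation `p̄` for a unique prime `p`, or the
`p`-adic valuation `v_p` for a unique prime `p`. -/
theorem valuation_int_classification {Γ : Type*} [LinearOrderedCommGroupWithZero Γ]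
    (v : Valuation ℤ Γ) :
    ((v.IsEquiv trivialValuationInt ∧
        ¬(∃ p : Nat.Primes, v.IsEquiv (primeBarValuation p)) ∧
        ¬(∃ p : Nat.Primes, IsPadicType v p)) ∨
      (¬v.IsEquiv trivialValuationInt ∧
        (∃ p : Nat.Primes, v.IsEquiv (primeBarValuation p)) ∧
        ¬(∃ p : Nat.Primes, IsPadicType v p)) ∨
      (¬v.IsEquiv trivialValuationInt ∧
        ¬(∃ p : Nat.Primes, v.IsEquiv (primeBarValuation p)) ∧
        (∃ p : Nat.Primes, IsPadicType v p))) ∧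
    (∀ p q : Nat.Primes, v.IsEquiv (primeBarValuation p) →
      v.IsEquiv (primeBarValuation q) → p = q) ∧
    (∀ p q : Nat.Primes, IsPadicType v p → IsPadicType v q → p = q) := by
  simp only [isEquiv_trivialValuationInt_iff, isEquiv_primeBarValuation_iff, isPadicType_iff]
  refine ⟨?_, fun p q hp hq ↦ primes_eq_of_valuation_lt_one v (by simp [hp]) (by simp [hq]),
    fun p q hp hq ↦ primes_eq_of_valuation_lt_one v hp.2 hq.2⟩
  by_cases htriv : ∀ p : Nat.Primes, v ((p : ℕ) : ℤ) = 1
  · exact .inl ⟨htriv, by simp [htriv], by simp [htriv]⟩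
  obtain ⟨p, hp⟩ := not_forall.1 htriv
  have hlt : v ((p : ℕ) : ℤ) < 1 := (valuation_intCast_le_one v p).lt_of_ne hp
  by_cases hzero : v ((p : ℕ) : ℤ) = 0
  · refine .inr (.inl ⟨htriv, ⟨p, hzero⟩, ?_⟩)
    rintro ⟨q, hq₀, hq⟩
    exact hq₀ (primes_eq_of_valuation_lt_one v hlt hq ▸ hzero)
  · refine .inr (.inr ⟨htriv, ?_, ⟨p, hzero, hlt⟩⟩)
    rintro ⟨q, hq⟩
    obtain rfl : p = q := primes_eq_of_valuation_lt_one v hlt (by simp [hq])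
    exact hzero hq
end
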